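/- Let T, the constants, and a gadget system satisfying (G1)–(G9) be as in the context, and let A₂ ⊆ A₁ be a subset of size σ₂kt such that for every α ∈ A₂ and every s ∈ S(α), the vertex s has at least τ₂kt out-neighbours and at least τ₂kt in-neighbours that are available for α with respect to A₂. Then there is a subset A₃ ⊆ A₂ and a partition {B₁, …, B_{σ₃t}} of A₃ such that: (i) |B_i| = 10k for every i ∈ [σ₃t]; (ii) for every i ∈ [σ₃t], every α ∈ B_i and every u ∈ S(α), the vertex u has at least τ₃kt out-neighbours and at least τ₃kt in-neighbours that are eligible for B_i in W(A₃ ∖ B_i) ∖ X(α); (iii) for every i ∈ [σ₃t], there are at least n/10 vertices in V_good ∩ W(A₃) that are eligible for B_i in W(A₃). -/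

import Mathlib

open Finset

namespace TournamentPartition

/-! ### Basic constants from the paper -/

def rho : ℕ := 10 ^ 4
def sigma1 : ℕ := 10 ^ 60
def sigma2 : ℕ := 10 ^ 4
def sigma3 : ℕ := 10

/-- `s` contains at least `m` elements satisfying `P`. -/
def ManyIn {α : Type*} (s : Finset α) (m : ℝ) (P : α → Prop) : Prop :=
  ∃ s' : Finset α, s' ⊆ s ∧ m ≤ (s'.card : ℝ) ∧ ∀ x ∈ s', P x

section Defs

variable {V I : Type*}

/-- `E u v` means that the edge between `u` and `v` is directed from `u` to `v`. -/
def IsTournament (E : V → V → Prop) : Prop :=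
  (∀ v, ¬ E v v) ∧ ∀ u v : V, u ≠ v → (E u v ↔ ¬ E v u)

/-- There is a directed path from `u` to `v` all of whose vertices lie in `S`. -/
def ReachWithin (E : V → V → Prop) (S : Set V) (u v : V) : Prop :=
  Relation.ReflTransGen (fun a b => a ∈ S ∧ b ∈ S ∧ E a b) u v

def StronglyConnectedOn (E : V → V → Prop) (S : Set V) : Prop :=
  ∀ u ∈ S, ∀ v ∈ S, ReachWithin E S u v

/-- A directed path, as a list of distinct vertices with consecutive edges. -/
def IsDiPath (E : V → V → Prop) (l : List V) : Prop :=
  l ≠ [] ∧ l.Nodup ∧ l.Chain' E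

variable [Fintype V] [DecidableEq V]

/-- The set `S` induces a strongly `k`-connected subtournament. -/
def StronglyKConnectedOn (E : V → V → Prop) (k : ℕ) (S : Finset V) : Prop :=
  k + 1 ≤ S.card ∧
    ∀ Z : Finset V, Z.card ≤ k → StronglyConnectedOn E ((S \ Z : Finset V) : Set V)

def StronglyKConnected (E : V → V → Prop) (k : ℕ) : Prop :=
  StronglyKConnectedOn E k Finset.univ

def outN (E : V → V → Prop) [DecidableRel E] (u : V) : Finset V :=
  Finset.univ.filter fun v => E u v

def inN (E : V → V → Prop) [DecidableRel E] (u : V) : Finset V :=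
  Finset.univ.filter fun v => E v u

/-- A system of gadgets `U(α)` with special sets `S⁺(α), S⁻(α) ⊆ S(α) ⊆ U(α)`,
exceptional sets `X(α)` and special vertices `s⁺(α), s⁻(α) ∈ S(α)`. -/
structure GadgetSystem (V I : Type*) where
  U : I → Finset V
  S : I → Finset V
  Sp : I → Finset V
  Sm : I → Finset V
  X : I → Finset V
  sp : I → V
  sm : I → V
  sp_mem : ∀ α, sp α ∈ S α
  sm_mem : ∀ α, sm α ∈ S α
  Sp_subset : ∀ α, Sp α ⊆ S α
  Sm_subset : ∀ α, Sm α ⊆ S α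
  S_subset : ∀ α, S α ⊆ U α

variable [Fintype I] [DecidableEq I]

def Vokay (G : GadgetSystem V I) : Finset V :=
  Finset.univ \ Finset.univ.biUnion G.S

/-- Vertices of `V_okay` having no out-neighbour in `S⁻(α)` for at least `k*t` indices `α`. -/
def VbadP (E : V → V → Prop) [DecidableRel E] (G : GadgetSystem V I) (k t : ℕ) : Finset V :=
  (Vokay G).filter fun u =>
    k * t ≤ (Finset.univ.filter fun α : I => ∀ v ∈ G.Sm α, ¬ E u v).card

/-- Vertices of `V_okay` having no in-neighbour in `S⁺(α)` for at least `k*t` indices `α`. -/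
def VbadM (E : V → V → Prop) [DecidableRel E] (G : GadgetSystem V I) (k t : ℕ) : Finset V :=
  (Vokay G).filter fun u =>
    k * t ≤ (Finset.univ.filter fun α : I => ∀ v ∈ G.Sp α, ¬ E v u).card

def Vbad (E : V → V → Prop) [DecidableRel E] (G : GadgetSystem V I) (k t : ℕ) : Finset V :=
  VbadP E G k t ∩ VbadM E G k t

def VgoodP (E : V → V → Prop) [DecidableRel E] (G : GadgetSystem V I) (k t : ℕ) : Finset V :=
  Vokay G \ VbadP E G k t

def VgoodM (E : V → V → Prop) [DecidableRel E] (G : GadgetSystem V I) (k t : ℕ) : Finset V :=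
  Vokay G \ VbadM E G k t

def Vgood (E : V → V → Prop) [DecidableRel E] (G : GadgetSystem V I) (k t : ℕ) : Finset V :=
  VgoodP E G k t ∩ VgoodM E G k t

/-- `W(C) = V ∖ ⋃_{α ∈ C} U(α)`. -/
def Wof (G : GadgetSystem V I) (C : Finset I) : Finset V :=
  Finset.univ \ C.biUnion G.U

def NokayP (E : V → V → Prop) [DecidableRel E] (G : GadgetSystem V I) (u : V) : Finset V :=
  outN E u ∩ Vokay G

def NokayM (E : V → V → Prop) [DecidableRel E] (G : GadgetSystem V I) (u : V) : Finset V :=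
  inN E u ∩ Vokay G

def NgoodP (E : V → V → Prop) [DecidableRel E] (G : GadgetSystem V I) (k t : ℕ) (u : V) :
    Finset V :=
  outN E u ∩ VgoodP E G k t

def NgoodM (E : V → V → Prop) [DecidableRel E] (G : GadgetSystem V I) (k t : ℕ) (u : V) :
    Finset V :=
  inN E u ∩ Vgood E G k t

/-! ### Properties (G1)–(G9) -/

def CondG1 (G : GadgetSystem V I) : Prop :=
  ∀ α β : I, α ≠ β → Disjoint (G.U α) (G.U β)

def CondG2 (G : GadgetSystem V I) (k t : ℕ) : Prop :=
  ∀ α : I, (G.S α).card ≤ rho ∧ (G.X α).card ≤ rho * sigma1 * k * t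

def CondG3 (E : V → V → Prop) (G : GadgetSystem V I) : Prop :=
  ∀ α : I, ∀ u ∈ G.Sm α, ∀ v ∈ G.Sp α, ReachWithin E (G.U α : Set V) u v

def CondG4 (E : V → V → Prop) (G : GadgetSystem V I) : Prop :=
  ∀ α : I, ∀ x : V, x ∉ G.X α →
    (E x (G.sp α) → ∀ u ∈ G.U α \ G.S α, E x u) ∧
    (E (G.sm α) x → ∀ u ∈ G.U α \ G.S α, E u x)

def CondG5 (E : V → V → Prop) [DecidableRel E] (G : GadgetSystem V I) (k t : ℕ) : Prop :=
  ∀ u ∈ Vokay G,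
    10 ^ 12 * (VbadP E G k t).card ≤ (outN E u).card ∧
    10 ^ 12 * (VbadM E G k t).card ≤ (inN E u).card

/-- Properties (G1)–(G5) of a gadget system. -/
def GadgetHyp (E : V → V → Prop) [DecidableRel E] (G : GadgetSystem V I) (k t : ℕ) : Prop :=
  CondG1 G ∧ CondG2 G k t ∧ CondG3 E G ∧ CondG4 E G ∧ CondG5 E G k t

def CondG6 (E : V → V → Prop) [DecidableRel E] (G : GadgetSystem V I) (k t : ℕ) : Prop :=
  (Fintype.card V : ℝ) / 2 ≤ ((Vgood E G k t).card : ℝ)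

def CondG7 (E : V → V → Prop) [DecidableRel E] (G : GadgetSystem V I) (k t τ₁ : ℕ) : Prop :=
  ∀ u ∈ Vokay G,
    max ((10 : ℝ) ^ 11 * ((VbadP E G k t).card : ℝ)) (((τ₁ * k * t : ℕ) : ℝ) / 2)
      ≤ ((outN E u ∩ VgoodP E G k t).card : ℝ)

def CondG8 (E : V → V → Prop) [DecidableRel E] (G : GadgetSystem V I) (k t τ₁ : ℕ) : Prop :=
  ∀ u ∈ Vokay G,
    max ((10 : ℝ) ^ 11 * ((VbadM E G k t).card : ℝ)) (((τ₁ * k * t : ℕ) : ℝ) / 2)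
      ≤ ((inN E u ∩ Vgood E G k t).card : ℝ)

def CondG9 (E : V → V → Prop) [DecidableRel E] (G : GadgetSystem V I) (k t τ₁ : ℕ) : Prop :=
  ∀ u : V,
    max ((10 : ℝ) ^ 11 * (((Finset.univ \ Vokay G).card : ℕ) : ℝ)) (((τ₁ * k * t : ℕ) : ℝ) / 2)
      ≤ ((outN E u ∩ Vokay G).card : ℝ) ∧
    max ((10 : ℝ) ^ 11 * (((Finset.univ \ Vokay G).card : ℕ) : ℝ)) (((τ₁ * k * t : ℕ) : ℝ) / 2)
      ≤ ((inN E u ∩ Vokay G).card : ℝ)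

/-- Properties (G6)–(G9) of a gadget system. -/
def GadgetHyp2 (E : V → V → Prop) [DecidableRel E] (G : GadgetSystem V I) (k t τ₁ : ℕ) :
    Prop :=
  CondG6 E G k t ∧ CondG7 E G k t τ₁ ∧ CondG8 E G k t τ₁ ∧ CondG9 E G k t τ₁

/-! ### Available vertices -/

def AvailA1 (E : V → V → Prop) [DecidableRel E] (G : GadgetSystem V I) (k t : ℕ)
    (W : Finset V) (u : V) : Prop :=
  u ∈ Vgood E G k t ∩ W

def AvailA2 (E : V → V → Prop) [DecidableRel E] (G : GadgetSystem V I) (k t τ₂ : ℕ)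
    (W : Finset V) (u : V) : Prop :=
  u ∈ (VgoodP E G k t \ VgoodM E G k t) ∩ W ∧
    ManyIn (inN E u) ((τ₂ * k * t : ℕ) : ℝ) (AvailA1 E G k t W)

def AvailA3 (E : V → V → Prop) [DecidableRel E] (G : GadgetSystem V I) (k t τ₂ : ℕ)
    (W : Finset V) (u : V) : Prop :=
  u ∈ (VgoodM E G k t \ VgoodP E G k t) ∩ W ∧
    ManyIn (outN E u) ((τ₂ * k * t : ℕ) : ℝ)
      (fun v => AvailA1 E G k t W v ∨ AvailA2 E G k t τ₂ W v)

def AvailA4 (E : V → V → Prop) [DecidableRel E] (G : GadgetSystem V I) (k t τ₂ : ℕ)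
    (W : Finset V) (u : V) : Prop :=
  u ∈ Vbad E G k t ∩ W ∧
    ManyIn (outN E u) ((τ₂ * k * t : ℕ) : ℝ)
      (fun v => AvailA1 E G k t W v ∨ AvailA2 E G k t τ₂ W v) ∧
    ManyIn (inN E u) ((τ₂ * k * t : ℕ) : ℝ) (AvailA1 E G k t W)

/-- `u` is available (for `α`) with respect to a family `𝒜`, where `W = W(𝒜 ∖ {α})`. -/
def Available (E : V → V → Prop) [DecidableRel E] (G : GadgetSystem V I) (k t τ₂ : ℕ)
    (W : Finset V) (u : V) : Prop :=
  AvailA1 E G k t W u ∨ AvailA2 E G k t τ₂ W u ∨ AvailA3 E G k t τ₂ W u ∨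
    AvailA4 E G k t τ₂ W u

/-! ### Eligible and helpful vertices -/

/-- Indices `α ∈ 𝒜` such that `u` has no out-neighbour in `S⁻(α)`. -/
def MissOut (E : V → V → Prop) [DecidableRel E] (G : GadgetSystem V I) (𝒜 : Finset I)
    (u : V) : Finset I :=
  𝒜.filter fun α => ∀ v ∈ G.Sm α, ¬ E u v

/-- Indices `α ∈ 𝒜` such that `u` has no in-neighbour in `S⁺(α)`. -/
def MissIn (E : V → V → Prop) [DecidableRel E] (G : GadgetSystem V I) (𝒜 : Finset I)
    (u : V) : Finset I :=
  𝒜.filter fun α => ∀ v ∈ G.Sp α, ¬ E v u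

def Nice1 (E : V → V → Prop) [DecidableRel E] (G : GadgetSystem V I) (k t : ℕ)
    (𝒜 : Finset I) (W : Finset V) (u : V) : Prop :=
  u ∈ Vgood E G k t ∩ W ∧ (MissOut E G 𝒜 u).card ≤ k ∧ (MissIn E G 𝒜 u).card ≤ k

def Nice2 (E : V → V → Prop) [DecidableRel E] (G : GadgetSystem V I) (k t : ℕ) (m : ℝ)
    (𝒜 : Finset I) (W : Finset V) (u : V) : Prop :=
  u ∈ (VgoodP E G k t \ VgoodM E G k t) ∩ W ∧ (MissOut E G 𝒜 u).card ≤ k ∧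
    ManyIn (inN E u) m (Nice1 E G k t 𝒜 W)

def Nice3 (E : V → V → Prop) [DecidableRel E] (G : GadgetSystem V I) (k t : ℕ) (m : ℝ)
    (𝒜 : Finset I) (W : Finset V) (u : V) : Prop :=
  u ∈ (VgoodM E G k t \ VgoodP E G k t) ∩ W ∧ (MissIn E G 𝒜 u).card ≤ k ∧
    ManyIn (outN E u) m (fun v => Nice1 E G k t 𝒜 W v ∨ Nice2 E G k t m 𝒜 W v)

def Nice4 (E : V → V → Prop) [DecidableRel E] (G : GadgetSystem V I) (k t : ℕ) (m : ℝ)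
    (𝒜 : Finset I) (W : Finset V) (u : V) : Prop :=
  u ∈ Vbad E G k t ∩ W ∧
    ManyIn (inN E u) m (Nice1 E G k t 𝒜 W) ∧
    ManyIn (outN E u) m (fun v => Nice1 E G k t 𝒜 W v ∨ Nice2 E G k t m 𝒜 W v)

def NiceFor (E : V → V → Prop) [DecidableRel E] (G : GadgetSystem V I) (k t : ℕ) (m : ℝ)
    (𝒜 : Finset I) (W : Finset V) (u : V) : Prop :=
  Nice1 E G k t 𝒜 W u ∨ Nice2 E G k t m 𝒜 W u ∨ Nice3 E G k t m 𝒜 W u ∨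
    Nice4 E G k t m 𝒜 W u

/-- `u` is eligible for `𝒜` in `W`. -/
def Eligible (E : V → V → Prop) [DecidableRel E] (G : GadgetSystem V I) (k t τ₃ : ℕ)
    (𝒜 : Finset I) (W : Finset V) (u : V) : Prop :=
  NiceFor E G k t ((τ₃ * k * t : ℕ) : ℝ) 𝒜 W u

/-- `u` is helpful for `𝒜` in `W`. -/
def Helpful (E : V → V → Prop) [DecidableRel E] (G : GadgetSystem V I) (k t : ℕ)
    (𝒜 : Finset I) (W : Finset V) (u : V) : Prop :=
  NiceFor E G k t (k : ℝ) 𝒜 W u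

end Defs

noncomputable def phi0 (τ₁ : ℕ) : ℝ := (τ₁ : ℝ) / 4
noncomputable def phi1 (τ₁ : ℕ) : ℝ := phi0 τ₁ / (2 ^ 6 * (rho : ℝ))
noncomputable def phi2 (τ₁ : ℕ) : ℝ := phi1 τ₁ / (2 ^ 14 * (rho : ℝ) ^ 2)
noncomputable def phi3 (τ₁ : ℕ) : ℝ := phi2 τ₁ / (2 ^ 14 * (rho : ℝ) ^ 2)

/-!
Arrange `𝒜₂` as a grid with `20k` rows and `500t` columns. A vertex of `V_good⁺` has fewer than `kt`
indices `α` with no out-neighbour in `S⁻(α)`, so the transversal obtained by choosing one column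
independently in each row contains at most `k / 500` of them on average, and by an exponential
moment bound it contains more than `k` with probability at most `10 ^ (-9)`, even when the column
of one row is prescribed. Feeding this up the hierarchy of available vertices (a union bound for
each vertex, then Markov's inequality over its neighbours) shows that with high probability the
transversal serves a prescribed gadget on it: all vertices of `S(α)` keep many neighbours eligible
for the whole transversal.

The `500t` cyclic translates of one column choice are pairwise disjoint, and averaging yields a
choice for which almost all translates serve at least half of their `20k` gadgets. Since the `U(α)`
are disjoint, few translates cover a large part of `V`. Keep `10t` of the remaining translates and
in each of them `10k` served gadgets. Passing to subfamilies only makes eligibility easier, because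
there are fewer sets `S^±(α)` to miss and more vertices left in `W`.
-/

section ManyIn

variable {β : Type*} {s t : Finset β} {m m' : ℝ} {P Q : β → Prop}

lemma ManyIn.mono (h : ManyIn s m P) (hst : s ⊆ t) (hm : m' ≤ m) (hPQ : ∀ x, P x → Q x) :
    ManyIn t m' Q :=
  let ⟨u, hu, hmu, hP⟩ := h
  ⟨u, hu.trans hst, hm.trans hmu, fun x hx => hPQ x (hP x hx)⟩

lemma ManyIn.mono_pred (h : ManyIn s m P) (hPQ : ∀ x, P x → Q x) : ManyIn s m Q :=
  h.mono Subset.rfl le_rfl hPQ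

lemma ManyIn.sdiff [DecidableEq β] (h : ManyIn s m P) (X : Finset β) :
    ManyIn (s \ X) (m - #X) (fun x => P x ∧ x ∈ s \ X) := by
  obtain ⟨u, hu, hm, hP⟩ := h
  have hsub : u \ X ⊆ s \ X := sdiff_subset_sdiff hu Subset.rfl
  refine ⟨u \ X, hsub, ?_, fun x hx => ⟨hP x (mem_sdiff.1 hx).1, hsub hx⟩⟩
  have hcard : (#u : ℝ) ≤ #(u \ X) + #X := by
    exact_mod_cast Nat.sub_le_iff_le_add.1 (le_card_sdiff X u)
  linarith

lemma ManyIn.exists_subset_card_eq (h : ManyIn s m P) {n : ℕ} (hn : (n : ℝ) ≤ m) :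
    ∃ u ⊆ s, #u = n ∧ ∀ x ∈ u, P x := by
  obtain ⟨v, hvs, hmv, hP⟩ := h
  obtain ⟨u, huv, hu⟩ := Finset.exists_subset_card_eq (s := v) (by exact_mod_cast hn.trans hmv)
  exact ⟨u, huv.trans hvs, hu, fun x hx => hP x (huv hx)⟩

lemma ManyIn.exists_embedding (h : ManyIn s m P) {n : ℕ} (hn : (n : ℝ) ≤ m) :
    ∃ g : Fin n ↪ β, ∀ i, P (g i) := by
  obtain ⟨u, -, hu, hP⟩ := h.exists_subset_card_eq hn
  exact ⟨(u.equivFinOfCardEq hu).symm.toEmbedding.trans (.subtype _), fun i => hP _ (coe_mem _)⟩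

end ManyIn

section Rare

open Classical in
/-- At most a proportion `q` of the elements of `s` satisfy `P`: a uniformly random element of `s`
satisfies `P` with probability at most `q`. -/
def RareIn {Ω : Type*} (s : Finset Ω) (q : ℝ) (P : Ω → Prop) : Prop :=
  (#{ω ∈ s | P ω} : ℝ) ≤ q * #s

variable {Ω β : Type*} {s : Finset Ω} {q q₁ q₂ r : ℝ} {P Q : Ω → Prop}

lemma rareIn_iff [DecidablePred P] : RareIn s q P ↔ (#{ω ∈ s | P ω} : ℝ) ≤ q * #s := by
  unfold RareIn
  convert Iff.rfl

lemma RareIn.mono (h : RareIn s q₁ P) (hq : q₁ ≤ q₂) (hQP : ∀ ω ∈ s, Q ω → P ω) :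
    RareIn s q₂ Q := by
  classical
  rw [rareIn_iff] at h ⊢
  have hle : #{ω ∈ s | Q ω} ≤ #{ω ∈ s | P ω} := card_le_card fun ω hω => by
    rw [mem_filter] at hω ⊢
    exact ⟨hω.1, hQP ω hω.1 hω.2⟩
  calc (#{ω ∈ s | Q ω} : ℝ) ≤ #{ω ∈ s | P ω} := by exact_mod_cast hle
    _ ≤ q₁ * #s := h
    _ ≤ q₂ * #s := by gcongr

lemma RareIn.or (hP : RareIn s q₁ P) (hQ : RareIn s q₂ Q) :
    RareIn s (q₁ + q₂) (fun ω => P ω ∨ Q ω) := by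
  classical
  rw [rareIn_iff] at hP hQ ⊢
  calc (#{ω ∈ s | P ω ∨ Q ω} : ℝ) ≤ #{ω ∈ s | P ω} + #{ω ∈ s | Q ω} := by
        rw [filter_or]
        exact_mod_cast card_union_le _ _
    _ ≤ (q₁ + q₂) * #s := by linarith

lemma RareIn.exists_mem (Y : Finset β) {P : Ω → β → Prop} (h : ∀ y ∈ Y, RareIn s q (P · y)) :
    RareIn s (#Y * q) (fun ω => ∃ y ∈ Y, P ω y) := by
  classical
  simp only [rareIn_iff] at h ⊢
  have hsub : ({ω ∈ s | ∃ y ∈ Y, P ω y} : Finset Ω) ⊆ Y.biUnion fun y => {ω ∈ s | P ω y} :=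
    fun ω hω => by
      obtain ⟨hω, y, hy, hP⟩ := mem_filter.1 hω
      exact mem_biUnion.2 ⟨y, hy, mem_filter.2 ⟨hω, hP⟩⟩
  calc (#{ω ∈ s | ∃ y ∈ Y, P ω y} : ℝ) ≤ ∑ y ∈ Y, (#{ω ∈ s | P ω y} : ℝ) := by
        exact_mod_cast (card_le_card hsub).trans card_biUnion_le
    _ ≤ ∑ _y ∈ Y, q * #s := sum_le_sum h
    _ = #Y * q * #s := by rw [sum_const, nsmul_eq_mul, mul_assoc]

lemma RareIn.of_fiberwise [Finite β] [DecidableEq β] (g : Ω → β)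
    (h : ∀ y, RareIn {ω ∈ s | g ω = y} q P) : RareIn s q P := by
  classical
  cases nonempty_fintype β
  simp only [rareIn_iff] at h ⊢
  have card_eq (u : Finset Ω) : (#u : ℝ) = ∑ y, (#{ω ∈ u | g ω = y} : ℝ) := by
    exact_mod_cast card_eq_sum_card_fiberwise (f := g) (t := univ) fun _ _ => mem_coe.2 (mem_univ _)
  rw [card_eq, card_eq s, mul_sum]
  refine sum_le_sum fun y _ => ?_
  rw [filter_comm]
  exact h y

lemma RareIn.comp_equiv [Fintype Ω] (h : RareIn univ q P) (σ : Ω ≃ Ω) :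
    RareIn univ q (fun ω => P (σ ω)) := by
  classical
  rw [rareIn_iff] at h ⊢
  rwa [card_equiv σ (t := ({ω | P ω} : Finset Ω)) fun ω => by simp only [mem_filter_univ]]

lemma RareIn.manyIn_not (h : RareIn s q P) : ManyIn s ((1 - q) * #s) (fun ω => ¬ P ω) := by
  classical
  rw [rareIn_iff] at h
  refine ⟨{ω ∈ s | ¬ P ω}, filter_subset _ _, ?_, fun ω hω => (mem_filter.1 hω).2⟩
  have hsplit : (#{ω ∈ s | P ω} + #{ω ∈ s | ¬ P ω} : ℝ) = #s := by
    exact_mod_cast card_filter_add_card_filter_not (s := s) P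
  linarith

section DoubleCounting

variable {Y : Finset β} {P : Ω → β → Prop}

lemma sum_card_filter_le_of_rareIn [∀ ω, DecidablePred (P ω)] (h : ∀ y ∈ Y, RareIn s q (P · y)) :
    ∑ ω ∈ s, (#{y ∈ Y | P ω y} : ℝ) ≤ #s * (q * #Y) := by
  classical
  simp only [rareIn_iff] at h
  calc ∑ ω ∈ s, (#{y ∈ Y | P ω y} : ℝ) = ∑ y ∈ Y, (#{ω ∈ s | P ω y} : ℝ) := by
        exact_mod_cast sum_card_bipartiteAbove_eq_sum_card_bipartiteBelow P
    _ ≤ ∑ _y ∈ Y, q * #s := sum_le_sum h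
    _ = #s * (q * #Y) := by rw [sum_const, nsmul_eq_mul]; ring

lemma exists_rareIn_of_forall_rareIn (hs : s.Nonempty) (h : ∀ y ∈ Y, RareIn s q (P · y)) :
    ∃ ω ∈ s, RareIn Y q (P ω) := by
  classical
  simp only [rareIn_iff (s := Y)]
  refine exists_le_of_sum_le hs ((sum_card_filter_le_of_rareIn h).trans_eq ?_)
  rw [sum_const, nsmul_eq_mul]

/-- Markov's inequality for the number of `y ∈ Y` with `P ω y`. -/
lemma RareIn.not_rareIn (hq : 0 ≤ q) (hr : 0 < r) (h : ∀ y ∈ Y, RareIn s q (P · y)) :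
    RareIn s (q / r) (fun ω => ¬ RareIn Y r (P ω)) := by
  classical
  simp only [rareIn_iff, not_le]
  rcases Y.eq_empty_or_nonempty with rfl | hY
  · simp only [filter_empty, card_empty, Nat.cast_zero, mul_zero, lt_self_iff_false, filter_false]
    positivity
  have hY : (0 : ℝ) < #Y := by exact_mod_cast hY.card_pos
  set bad : Finset Ω := {ω ∈ s | r * #Y < (#{y ∈ Y | P ω y} : ℝ)}
  have hcount : #bad * (r * #Y) ≤ #s * (q * #Y) :=
    calc #bad * (r * #Y) = ∑ _ω ∈ bad, r * (#Y : ℝ) := by rw [sum_const, nsmul_eq_mul]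
      _ ≤ ∑ ω ∈ bad, (#{y ∈ Y | P ω y} : ℝ) := sum_le_sum fun ω hω => (mem_filter.1 hω).2.le
      _ ≤ ∑ ω ∈ s, (#{y ∈ Y | P ω y} : ℝ) :=
        sum_le_sum_of_subset_of_nonneg (filter_subset _ _) fun _ _ _ => Nat.cast_nonneg _
      _ ≤ #s * (q * #Y) := sum_card_filter_le_of_rareIn h
  rw [div_mul_eq_mul_div, le_div_iff₀ hr]
  refine le_of_mul_le_mul_right ?_ hY
  linarith

end DoubleCounting

lemma RareIn.not_manyIn (hq : 0 ≤ q) {N X : Finset β} {m m' : ℝ} {P : β → Prop}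
    {Q : Ω → β → Prop} (hN : ManyIn N m P) (hm : 2 * m' + #X ≤ m)
    (h : ∀ y, P y → y ∉ X → RareIn s q (fun ω => ¬ Q ω y)) :
    RareIn s (2 * q) (fun ω => ¬ ManyIn N m' (Q ω)) := by
  classical
  obtain ⟨Y, hYN, hYm, hY⟩ := hN.sdiff X
  have hfail := RareIn.not_rareIn (r := 1 / 2) hq (by norm_num) fun y hy =>
    h y (hY y hy).1 (mem_sdiff.1 (hY y hy).2).2
  refine hfail.mono (by linarith) fun ω _ hω hrare => hω ?_
  exact hrare.manyIn_not.mono (hYN.trans sdiff_subset) (by linarith) fun _ => not_not.1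

lemma rareIn_card_le_mul_card {V : Type*} [Fintype V] [Nonempty V] {s : Finset β} (hq : 0 ≤ q)
    {U : β → Finset V} (hU : (s : Set β).PairwiseDisjoint U) :
    RareIn s q (fun i => (Fintype.card V : ℝ) ≤ q * #s * #(U i)) := by
  classical
  set heavy : Finset β := {i ∈ s | (Fintype.card V : ℝ) ≤ q * #s * #(U i)}
  have hV : (0 : ℝ) < Fintype.card V := by exact_mod_cast Fintype.card_pos
  have hunion : (∑ i ∈ s, #(U i) : ℝ) ≤ Fintype.card V := by
    rw [← Nat.cast_sum, ← card_biUnion hU]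
    exact_mod_cast card_le_univ _
  rw [rareIn_iff]
  refine le_of_mul_le_mul_right ?_ hV
  calc (#heavy : ℝ) * Fintype.card V = ∑ _i ∈ heavy, (Fintype.card V : ℝ) := by
        rw [sum_const, nsmul_eq_mul]
    _ ≤ ∑ i ∈ heavy, q * #s * #(U i) := sum_le_sum fun i hi => (mem_filter.1 hi).2
    _ ≤ ∑ i ∈ s, q * #s * #(U i) :=
      sum_le_sum_of_subset_of_nonneg (filter_subset _ _) fun _ _ _ => by positivity
    _ = q * #s * ∑ i ∈ s, (#(U i) : ℝ) := by rw [mul_sum]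
    _ ≤ q * #s * Fintype.card V := by gcongr

end Rare

section Transversal

lemma sum_two_pow_card_filter {R Z : Type*} [Fintype R] [DecidableEq R] (s : R → Finset Z)
    (p : R → Z → Prop) [∀ b, DecidablePred (p b)] :
    ∑ f ∈ Fintype.piFinset s, 2 ^ #{b | p b (f b)} = ∏ b, (#(s b) + #{z ∈ s b | p b z}) := by
  have hrow (b : R) : #(s b) + #{z ∈ s b | p b z} = ∑ z ∈ s b, if p b z then 2 else 1 := by
    rw [card_eq_sum_ones, card_filter, ← sum_add_distrib]
    exact sum_congr rfl fun z _ => by split_ifs <;> rfl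
  simp only [hrow, prod_univ_sum, prod_ite, prod_const, one_pow, mul_one]

/-- Markov's inequality for the exponential moment `𝔼 2 ^ #{b | p b (f b)}`, which factors over
the rows `b`. -/
lemma rareIn_piFinset_le_card_filter {R Z : Type*} [Fintype R] [DecidableEq R] (s : R → Finset Z)
    (p : R → Z → Prop) [∀ b, DecidablePred (p b)] (m : ℕ) :
    RareIn (Fintype.piFinset s) (Real.exp (∑ b, (#{z ∈ s b | p b z} : ℝ) / #(s b)) / 2 ^ m)
      (fun f => m ≤ #{b | p b (f b)}) := by
  rw [rareIn_iff, div_mul_eq_mul_div, le_div_iff₀ (by positivity)]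
  set bad := {f ∈ Fintype.piFinset s | m ≤ #{b | p b (f b)}}
  have hrow (b : R) : (#(s b) + #{z ∈ s b | p b z} : ℝ) ≤
      Real.exp (#{z ∈ s b | p b z} / #(s b)) * #(s b) := by
    rcases (s b).eq_empty_or_nonempty with hempty | hnonempty
    · simp [hempty]
    · have hb : (0 : ℝ) < #(s b) := by exact_mod_cast hnonempty.card_pos
      calc (#(s b) + #{z ∈ s b | p b z} : ℝ)
          = (#{z ∈ s b | p b z} / #(s b) + 1) * #(s b) := by
            rw [add_mul, div_mul_cancel₀ _ hb.ne', one_mul, add_comm]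
        _ ≤ _ := by gcongr; exact Real.add_one_le_exp _
  calc (#bad : ℝ) * 2 ^ m = ∑ _f ∈ bad, (2 : ℝ) ^ m := by rw [sum_const, nsmul_eq_mul]
    _ ≤ ∑ f ∈ bad, (2 : ℝ) ^ #{b | p b (f b)} := by
      refine sum_le_sum fun f hf => ?_
      gcongr
      · norm_num
      · exact (mem_filter.1 hf).2
    _ ≤ ∑ f ∈ Fintype.piFinset s, (2 : ℝ) ^ #{b | p b (f b)} :=
      sum_le_sum_of_subset_of_nonneg (filter_subset _ _) fun _ _ _ => by positivity
    _ = ∏ b, (#(s b) + #{z ∈ s b | p b z} : ℝ) := by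
      exact_mod_cast sum_two_pow_card_filter s p
    _ ≤ ∏ b, Real.exp (#{z ∈ s b | p b z} / #(s b)) * #(s b) :=
      prod_le_prod (fun _ _ => by positivity) fun b _ => hrow b
    _ = _ := by rw [prod_mul_distrib, ← Real.exp_sum, Fintype.card_piFinset, Nat.cast_prod]

lemma exp_div_two_pow_le {k : ℕ} (hk : 100 ≤ k) :
    Real.exp (1 + k / 500) / 2 ^ (k + 1) ≤ 1 / 10 ^ 9 := by
  have hexp : Real.exp (1 / 4) ≤ 4 / 3 := by
    refine le_of_pow_le_pow_left₀ four_ne_zero (by norm_num) ?_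
    calc Real.exp (1 / 4) ^ 4 = Real.exp 1 := by rw [← Real.exp_nat_mul]; norm_num
      _ ≤ (4 / 3) ^ 4 := Real.exp_one_lt_d9.le.trans (by norm_num)
  have hk' : (100 : ℝ) ≤ k := by exact_mod_cast hk
  calc Real.exp (1 + k / 500) / 2 ^ (k + 1)
      ≤ Real.exp (k * (1 / 4)) / 2 ^ k := by
        gcongr
        · linarith
        · norm_num
        · omega
    _ = (Real.exp (1 / 4) / 2) ^ k := by rw [Real.exp_nat_mul, div_pow]
    _ ≤ (2 / 3) ^ k := by gcongr ?_ ^ k; linarith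
    _ ≤ (2 / 3) ^ 100 := pow_le_pow_of_le_one (by norm_num) (by norm_num) hk
    _ ≤ 1 / 10 ^ 9 := by norm_num

section Grid

variable {R Z : Type*} [DecidableEq R] [Fintype Z] [DecidableEq Z]

/-- The column choices `f : R → Z` whose transversal passes through the cell `(a, j)` of the
grid `R × Z`. -/
def through [Fintype R] (a : R) (j : Z) : Finset (R → Z) := {f | f a = j}

/-- The columns available in row `b` to a transversal through the cell `(a, j)`. -/
def columns (a : R) (j : Z) (b : R) : Finset Z := if b = a then {j} else univ

lemma through_eq_piFinset [Fintype R] (a : R) (j : Z) :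
    through a j = Fintype.piFinset (columns a j) := by
  ext f
  simp only [through, columns, mem_filter_univ, Fintype.mem_piFinset]
  refine ⟨fun h b => ?_, fun h => by simpa using h a⟩
  split_ifs with hb
  · rw [hb, h, mem_singleton]
  · exact mem_univ _

/-- Translation by `i` preserves the uniform distribution on column choices, so the expected
proportion of bad translates of `f` is at most the bound for a single column choice. -/
lemma exists_rareIn_translate [Fintype R] [AddGroup Z] {q r : ℝ} (hq : 0 ≤ q) (hr : 0 < r)
    {Bad : (R → Z) → R → Prop} (h : ∀ a j, RareIn (through a j) q (Bad · a)) :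
    ∃ f : R → Z, RareIn univ (q / r) (fun i => ¬ RareIn univ r (Bad fun b => f b + i)) := by
  have hrow (a : R) : RareIn univ q (Bad · a) := .of_fiberwise (· a) (h a)
  have hmarkov : RareIn univ (q / r) (fun f => ¬ RareIn univ r (Bad f)) :=
    .not_rareIn hq hr fun a _ => hrow a
  obtain ⟨f, -, hf⟩ := exists_rareIn_of_forall_rareIn (Y := (univ : Finset Z)) univ_nonempty
    fun i _ => hmarkov.comp_equiv (Equiv.addRight fun _ => i)
  exact ⟨f, hf⟩

end Grid

section Labelled

variable {R Z I : Type*} [Fintype R] [DecidableEq I]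

/-- The transversal `{(b, f b) | b ∈ R}` of the grid `R × Z`, where the grid labels part of the
index set `I` through `e`. -/
def transversal (e : R × Z ↪ I) (f : R → Z) : Finset I :=
  univ.image fun b => e (b, f b)

lemma transversal_subset {e : R × Z ↪ I} {D : Finset I} (he : ∀ x, e x ∈ D) (f : R → Z) :
    transversal e f ⊆ D :=
  image_subset_iff.2 fun _ _ => he _

lemma disjoint_transversal {e : R × Z ↪ I} {f g : R → Z} (hfg : ∀ b, f b ≠ g b) :
    Disjoint (transversal e f) (transversal e g) := by
  simp only [transversal, disjoint_left, mem_image, mem_univ, true_and]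
  rintro _ ⟨b, rfl⟩ ⟨c, hc⟩
  obtain ⟨rfl, hgf⟩ := Prod.mk.inj (e.injective hc)
  exact hfg c hgf.symm

lemma exists_subset_transversal_card_eq {e : R × Z ↪ I} {f : R → Z} {P : I → Prop} {q : ℝ}
    (h : RareIn univ q fun b => ¬ P (e (b, f b))) {n : ℕ}
    (hn : (n : ℝ) ≤ (1 - q) * Fintype.card R) :
    ∃ B ⊆ transversal e f, #B = n ∧ ∀ α ∈ B, P α := by
  obtain ⟨A, -, hA, hAP⟩ := h.manyIn_not.exists_subset_card_eq (n := n) hn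
  refine ⟨A.image fun b => e (b, f b), image_subset_image (subset_univ _), ?_, ?_⟩
  · rw [card_image_of_injective _ fun b c hbc => (Prod.mk.inj (e.injective hbc)).1, hA]
  · exact forall_mem_image.2 fun b hb => not_not.1 (hAP b hb)

end Labelled

section Concentration

variable {R Z I : Type*} [Fintype R] [Fintype Z] [Fintype I]

lemma sum_card_filter_row_le (e : R × Z ↪ I) (p : I → Prop) [DecidablePred p] :
    ∑ b, #{z | p (e (b, z))} ≤ #{α | p α} := by
  have hrow : ∑ b, #{z | p (e (b, z))} = #{x : R × Z | p (e x)} := by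
    simp only [card_filter, Fintype.sum_prod_type]
  rw [hrow]
  exact card_le_card_of_injOn e (fun x hx => by simpa using hx) e.injective.injOn

/-- The left side is the expected number of elements satisfying `p` on a random transversal through
`(a, j)`; the summand `1` accounts for the row `a`, where the column is fixed. -/
lemma sum_card_filter_div_card_le [DecidableEq R] (e : R × Z ↪ I) (p : I → Prop) [DecidablePred p]
    (a : R) (j : Z) {μ : ℝ} (hp : (#{α | p α} : ℝ) ≤ μ * Fintype.card Z) :
    ∑ b, (#{z ∈ columns a j b | p (e (b, z))} : ℝ) / #(columns a j b) ≤ 1 + μ := by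
  have hZ : (0 : ℝ) < Fintype.card Z := by exact_mod_cast Fintype.card_pos_iff.2 ⟨j⟩
  have hcell (b : R) : (#{z ∈ columns a j b | p (e (b, z))} : ℝ) / #(columns a j b) ≤
      (if b = a then 1 else 0) + #{z | p (e (b, z))} / Fintype.card Z := by
    by_cases hb : b = a
    · refine (div_le_one_of_le₀ ?_ (Nat.cast_nonneg _)).trans ?_
      · exact_mod_cast card_filter_le _ _
      · rw [if_pos hb]
        exact le_add_of_nonneg_right (by positivity)
    · simp [columns, hb]
  calc _ ≤ ∑ b, ((if b = a then 1 else 0) + (#{z | p (e (b, z))} : ℝ) / Fintype.card Z) :=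
        sum_le_sum fun b _ => hcell b
    _ = 1 + (∑ b, #{z | p (e (b, z))} : ℕ) / Fintype.card Z := by
        rw [sum_add_distrib, sum_ite_eq' univ a, if_pos (mem_univ a), ← sum_div, Nat.cast_sum]
    _ ≤ 1 + (#{α | p α} : ℝ) / Fintype.card Z := by
        gcongr
        exact sum_card_filter_row_le e p
    _ ≤ 1 + μ := by gcongr; exact (div_le_iff₀ hZ).2 hp

lemma rareIn_through_lt_card_filter_transversal [DecidableEq R] [DecidableEq Z]
    [DecidableEq I] (e : R × Z ↪ I) (p : I → Prop) [DecidablePred p] (a : R) (j : Z) {k : ℕ}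
    (hp : 500 * #{α | p α} ≤ k * Fintype.card Z) (hk : 100 ≤ k) :
    RareIn (through a j) (1 / 10 ^ 9) (fun f => k < #{α ∈ transversal e f | p α}) := by
  have hμ : (#{α | p α} : ℝ) ≤ (k : ℝ) / 500 * Fintype.card Z := by
    have : (500 * #{α | p α} : ℝ) ≤ k * Fintype.card Z := by exact_mod_cast hp
    linarith
  rw [through_eq_piFinset]
  refine (rareIn_piFinset_le_card_filter _ (fun b z => p (e (b, z))) (k + 1)).mono ?_
    fun f _ hf => Nat.succ_le_of_lt (hf.trans_le ?_)
  · refine le_trans ?_ (exp_div_two_pow_le hk)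
    gcongr
    exact sum_card_filter_div_card_le e p a j hμ
  · rw [transversal, filter_image]
    exact card_image_le

end Concentration

end Transversal

section Eligible

lemma mem_inter_sdiff_of_notMem {V : Type*} [DecidableEq V] {S W X : Finset V} {u : V}
    (hu : u ∈ S ∩ W) (huX : u ∉ X) : u ∈ S ∩ (W \ X) := by
  rw [← inter_sdiff_assoc]
  exact mem_sdiff.2 ⟨hu, huX⟩

variable {V I : Type*} [Fintype V] [DecidableEq V] {E : V → V → Prop} [DecidableRel E]
  {G : GadgetSystem V I} {k t : ℕ}

section Mono

variable {m : ℝ} {C D : Finset I} {W W' : Finset V} {u : V}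

lemma card_missOut_mono (h : C ⊆ D) : #(MissOut E G C u) ≤ #(MissOut E G D u) :=
  card_le_card (filter_subset_filter _ h)

lemma card_missIn_mono (h : C ⊆ D) : #(MissIn E G C u) ≤ #(MissIn E G D u) :=
  card_le_card (filter_subset_filter _ h)

variable [Fintype I]

lemma Nice1.mono (h : Nice1 E G k t D W u) (hC : C ⊆ D) (hW : W ⊆ W') : Nice1 E G k t C W' u :=
  ⟨inter_subset_inter_left hW h.1, (card_missOut_mono hC).trans h.2.1,
    (card_missIn_mono hC).trans h.2.2⟩

lemma Nice2.mono (h : Nice2 E G k t m D W u) (hC : C ⊆ D) (hW : W ⊆ W') :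
    Nice2 E G k t m C W' u :=
  ⟨inter_subset_inter_left hW h.1, (card_missOut_mono hC).trans h.2.1,
    h.2.2.mono_pred fun _ hx => hx.mono hC hW⟩

lemma NiceFor.mono (h : NiceFor E G k t m D W u) (hC : C ⊆ D) (hW : W ⊆ W') :
    NiceFor E G k t m C W' u := by
  have h12 (x : V) (hx : Nice1 E G k t D W x ∨ Nice2 E G k t m D W x) :
      Nice1 E G k t C W' x ∨ Nice2 E G k t m C W' x :=
    hx.imp (·.mono hC hW) (·.mono hC hW)
  refine h.imp (·.mono hC hW) (Or.imp (·.mono hC hW) (Or.imp (fun h => ?_) fun h => ?_))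
  · exact ⟨inter_subset_inter_left hW h.1, (card_missIn_mono hC).trans h.2.1, h.2.2.mono_pred h12⟩
  · exact ⟨inter_subset_inter_left hW h.1, h.2.1.mono_pred fun _ hx => hx.mono hC hW,
      h.2.2.mono_pred h12⟩

end Mono

variable [Fintype I] {Ω : Type*} {s : Finset Ω} {q : ℝ} {C : Ω → Finset I} {W X : Finset V} {u : V}

/-- For a random index family `C ω` with `ω ∈ s`, each vertex of `V_good⁺` (resp. `V_good⁻`)
rarely misses more than `k` of the sets `S⁻(α)` (resp. `S⁺(α)`) with `α ∈ C ω`. -/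
structure RarelyMisses (E : V → V → Prop) [DecidableRel E] (G : GadgetSystem V I) (k t : ℕ)
    (s : Finset Ω) (q : ℝ) (C : Ω → Finset I) : Prop where
  missOut : ∀ v ∈ VgoodP E G k t, RareIn s q fun ω => k < #(MissOut E G (C ω) v)
  missIn : ∀ v ∈ VgoodM E G k t, RareIn s q fun ω => k < #(MissIn E G (C ω) v)

lemma RarelyMisses.missOut_or_missIn (hC : RarelyMisses E G k t s q C)
    (hu : u ∈ Vgood E G k t) : RareIn s (2 * q) fun ω =>
      ¬ (#(MissOut E G (C ω) u) ≤ k ∧ #(MissIn E G (C ω) u) ≤ k) := by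
  obtain ⟨huP, huM⟩ := mem_inter.1 hu
  refine ((hC.missOut u huP).or (hC.missIn u huM)).mono (by linarith) fun ω _ hω => ?_
  rwa [not_and_or, not_le, not_le] at hω

lemma RarelyMisses.not_nice1 (hC : RarelyMisses E G k t s q C) (hu : AvailA1 E G k t W u)
    (huX : u ∉ X) : RareIn s (2 * q) fun ω => ¬ Nice1 E G k t (C ω) (W \ X) u :=
  (hC.missOut_or_missIn (mem_inter.1 hu).1).mono le_rfl fun _ _ hω hmiss =>
    hω ⟨mem_inter_sdiff_of_notMem hu huX, hmiss⟩

variable {τ₂ : ℕ} {m : ℝ}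

lemma RarelyMisses.not_nice2 (hC : RarelyMisses E G k t s q C) (hq : 0 ≤ q)
    (hm : 2 * m + #X ≤ (τ₂ * k * t : ℕ)) (hu : AvailA2 E G k t τ₂ W u) (huX : u ∉ X) :
    RareIn s (5 * q) fun ω => ¬ Nice2 E G k t m (C ω) (W \ X) u := by
  have huP := (mem_sdiff.1 (mem_inter.1 hu.1).1).1
  have hin := RareIn.not_manyIn (by positivity) hu.2 hm fun _ => hC.not_nice1
  refine ((hC.missOut u huP).or hin).mono (by linarith) fun ω _ hω => ?_
  contrapose! hω
  exact ⟨mem_inter_sdiff_of_notMem hu.1 huX, hω⟩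

lemma RarelyMisses.not_nice1_or_nice2 (hC : RarelyMisses E G k t s q C) (hq : 0 ≤ q)
    (hm : 2 * m + #X ≤ (τ₂ * k * t : ℕ))
    (hu : AvailA1 E G k t W u ∨ AvailA2 E G k t τ₂ W u) (huX : u ∉ X) :
    RareIn s (5 * q) fun ω =>
      ¬ (Nice1 E G k t (C ω) (W \ X) u ∨ Nice2 E G k t m (C ω) (W \ X) u) := by
  rcases hu with hu | hu
  · exact (hC.not_nice1 hu huX).mono (by linarith) fun _ _ => mt Or.inl
  · exact (hC.not_nice2 hq hm hu huX).mono le_rfl fun _ _ => mt Or.inr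

lemma RarelyMisses.not_nice3 (hC : RarelyMisses E G k t s q C) (hq : 0 ≤ q)
    (hm : 2 * m + #X ≤ (τ₂ * k * t : ℕ)) (hu : AvailA3 E G k t τ₂ W u) (huX : u ∉ X) :
    RareIn s (11 * q) fun ω => ¬ Nice3 E G k t m (C ω) (W \ X) u := by
  have huM := (mem_sdiff.1 (mem_inter.1 hu.1).1).1
  have hout := RareIn.not_manyIn (by positivity) hu.2 hm fun _ => hC.not_nice1_or_nice2 hq hm
  refine ((hC.missIn u huM).or hout).mono (by linarith) fun ω _ hω => ?_
  contrapose! hω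
  exact ⟨mem_inter_sdiff_of_notMem hu.1 huX, hω⟩

lemma RarelyMisses.not_nice4 (hC : RarelyMisses E G k t s q C) (hq : 0 ≤ q)
    (hm : 2 * m + #X ≤ (τ₂ * k * t : ℕ)) (hu : AvailA4 E G k t τ₂ W u) (huX : u ∉ X) :
    RareIn s (14 * q) fun ω => ¬ Nice4 E G k t m (C ω) (W \ X) u := by
  have hin := RareIn.not_manyIn (by positivity) hu.2.2 hm fun _ => hC.not_nice1
  have hout := RareIn.not_manyIn (by positivity) hu.2.1 hm fun _ => hC.not_nice1_or_nice2 hq hm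
  refine (hin.or hout).mono (by linarith) fun ω _ hω => ?_
  contrapose! hω
  exact ⟨mem_inter_sdiff_of_notMem hu.1 huX, hω⟩

lemma RarelyMisses.not_niceFor (hC : RarelyMisses E G k t s q C) (hq : 0 ≤ q)
    (hm : 2 * m + #X ≤ (τ₂ * k * t : ℕ)) (hu : Available E G k t τ₂ W u) (huX : u ∉ X) :
    RareIn s (14 * q) fun ω => ¬ NiceFor E G k t m (C ω) (W \ X) u := by
  rcases hu with hu | hu | hu | hu
  · exact (hC.not_nice1 hu huX).mono (by linarith) fun _ _ => mt Or.inl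
  · exact (hC.not_nice2 hq hm hu huX).mono (by linarith) fun _ _ => mt (Or.inr ∘ Or.inl)
  · exact (hC.not_nice3 hq hm hu huX).mono (by linarith) fun _ _ =>
      mt (Or.inr ∘ Or.inr ∘ Or.inl)
  · exact (hC.not_nice4 hq hm hu huX).mono le_rfl fun _ _ => mt (Or.inr ∘ Or.inr ∘ Or.inr)

/-- The index family `C` serves the gadget `α` when only the vertices in `W` may be used: the
vertices of `S(α)` have many neighbours eligible for `C`, and half of the good vertices miss few
gadgets of `C`. The last condition does not involve `α`; it is included to be able to treat both
kinds of failure by a single union bound. -/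
structure Serves (E : V → V → Prop) [DecidableRel E] (G : GadgetSystem V I) (k t : ℕ) (m : ℝ)
    (C : Finset I) (W : Finset V) (α : I) : Prop where
  neighbours : ∀ u ∈ G.S α, ManyIn (outN E u) m (NiceFor E G k t m C (W \ G.X α)) ∧
    ManyIn (inN E u) m (NiceFor E G k t m C (W \ G.X α))
  good : ManyIn (Vgood E G k t) (#(Vgood E G k t) / 2)
    fun v => #(MissOut E G C v) ≤ k ∧ #(MissIn E G C v) ≤ k

lemma RarelyMisses.not_serves (hC : RarelyMisses E G k t s q C) (hq : 0 ≤ q) {α : I}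
    (hm : 2 * m + #(G.X α) ≤ (τ₂ * k * t : ℕ))
    (hav : ∀ u ∈ G.S α, ManyIn (outN E u) (τ₂ * k * t : ℕ) (Available E G k t τ₂ W) ∧
      ManyIn (inN E u) (τ₂ * k * t : ℕ) (Available E G k t τ₂ W)) :
    RareIn s ((56 * #(G.S α) + 4) * q) fun ω => ¬ Serves E G k t m (C ω) W α := by
  have hnice (v : V) (hv : Available E G k t τ₂ W v) (hvX : v ∉ G.X α) :=
    hC.not_niceFor hq hm hv hvX
  have hneighbours := RareIn.exists_mem (G.S α) fun u hu =>
    (RareIn.not_manyIn (by positivity) (hav u hu).1 hm hnice).or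
      (RareIn.not_manyIn (by positivity) (hav u hu).2 hm hnice)
  have hgood := RareIn.not_manyIn (N := Vgood E G k t) (X := ∅) (m' := #(Vgood E G k t) / 2)
    (by positivity) ⟨_, Subset.rfl, le_rfl, fun _ => id⟩ (by simp [mul_div_cancel₀])
    fun v hv _ => hC.missOut_or_missIn hv
  refine (hneighbours.or hgood).mono (by linarith) fun ω _ hω => ?_
  contrapose! hω
  exact ⟨hω.1, hω.2⟩

variable [DecidableEq I]

lemma rarelyMisses_transversal {R Z : Type*} [Fintype R] [DecidableEq R] [Fintype Z]
    [DecidableEq Z] (e : R × Z ↪ I) (a : R) (j : Z) (hZ : Fintype.card Z = 500 * t)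
    (hk : 100 ≤ k) : RarelyMisses E G k t (through a j) (1 / 10 ^ 9) (transversal e) where
  missOut v hv := by
    simp only [VgoodP, VbadP, mem_sdiff, mem_filter, not_and, not_le] at hv
    refine rareIn_through_lt_card_filter_transversal e _ a j ?_ hk
    rw [hZ]
    linarith [hv.2 hv.1]
  missIn v hv := by
    simp only [VgoodM, VbadM, mem_sdiff, mem_filter, not_and, not_le] at hv
    refine rareIn_through_lt_card_filter_transversal e _ a j ?_ hk
    rw [hZ]
    linarith [hv.2 hv.1]

end Eligible

section Partition

lemma exists_grid_embedding {I : Type*} {D : Finset I} {k t : ℕ} (hD : #D = sigma2 * k * t)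
    [NeZero (500 * t)] :
    ∃ e : Fin (20 * k) × ZMod (500 * t) ↪ I, ∀ x, e x ∈ D := by
  have hcard : Fintype.card (Fin (20 * k) × ZMod (500 * t)) = Fintype.card D := by
    rw [Fintype.card_prod, Fintype.card_fin, ZMod.card, Fintype.card_coe, hD, sigma2]
    ring
  exact ⟨(Fintype.equivOfCardEq hcard).toEmbedding.trans (.subtype _), fun x => coe_mem _⟩

variable {V I : Type*} {G : GadgetSystem V I}

lemma two_mul_add_card_X_le {k t τ₂ τ₃ : ℕ} (hG2 : CondG2 G k t)
    (hτ : 2 * τ₃ + rho * sigma1 ≤ τ₂) (α : I) :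
    2 * ((τ₃ * k * t : ℕ) : ℝ) + #(G.X α) ≤ (τ₂ * k * t : ℕ) := by
  have hle : 2 * (τ₃ * k * t) + #(G.X α) ≤ τ₂ * k * t :=
    calc 2 * (τ₃ * k * t) + #(G.X α) ≤ 2 * (τ₃ * k * t) + rho * sigma1 * k * t := by
          gcongr
          exact (hG2 α).2
      _ = (2 * τ₃ + rho * sigma1) * k * t := by ring
      _ ≤ τ₂ * k * t := by gcongr
  exact_mod_cast hle

variable [DecidableEq V]

lemma disjoint_biUnion_gadgets (hG1 : CondG1 G) {C D : Finset I} (h : Disjoint C D) :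
    Disjoint (C.biUnion G.U) (D.biUnion G.U) := by
  simp only [disjoint_biUnion_left, disjoint_biUnion_right]
  exact fun β hβ α hα => hG1 α β fun hαβ => disjoint_left.1 h hα (hαβ ▸ hβ)

lemma mul_card_biUnion_le {J : Type*} [Fintype J] {U : J → Finset V} {c n : ℕ}
    (hU : ∀ i, c * Fintype.card J * #(U i) ≤ n) : c * #(univ.biUnion U) ≤ n := by
  rcases isEmpty_or_nonempty J with _ | _
  · simp
  refine le_of_mul_le_mul_left ?_ (Fintype.card_pos (α := J))
  calc Fintype.card J * (c * #(univ.biUnion U))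
      ≤ Fintype.card J * (c * ∑ i, #(U i)) := by gcongr; exact card_biUnion_le
    _ = ∑ i, c * Fintype.card J * #(U i) := by rw [← mul_sum]; ring
    _ ≤ ∑ _i : J, n := sum_le_sum fun i _ => hU i
    _ = Fintype.card J * n := by rw [sum_const, smul_eq_mul, card_univ]

variable [Fintype V]

lemma inter_Wof (S : Finset V) (D : Finset I) : S ∩ Wof G D = S \ D.biUnion G.U := by
  rw [Wof, ← inter_sdiff_assoc, inter_univ]

lemma Wof_anti {C D : Finset I} (h : C ⊆ D) : Wof G D ⊆ Wof G C :=
  sdiff_subset_sdiff Subset.rfl (biUnion_subset_biUnion_of_subset_left _ h)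

variable [Fintype I] {E : V → V → Prop} [DecidableRel E] {k t τ₂ τ₃ : ℕ}

lemma Serves.manyIn_nice1 {m : ℝ} {C D : Finset I} {W : Finset V} {α : I}
    (h : Serves E G k t m C W α) (hG6 : CondG6 E G k t)
    (hD : 10 * #(D.biUnion G.U) ≤ Fintype.card V) :
    ManyIn (Vgood E G k t ∩ Wof G D) (Fintype.card V / 10) (Nice1 E G k t C (Wof G D)) := by
  have hD' : (10 * #(D.biUnion G.U) : ℝ) ≤ Fintype.card V := by exact_mod_cast hD
  have hV : (0 : ℝ) ≤ Fintype.card V := Nat.cast_nonneg _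
  rw [CondG6] at hG6
  refine (h.good.sdiff (D.biUnion G.U)).mono (inter_Wof _ D).ge (by linarith) fun v hv => ?_
  exact ⟨(inter_Wof _ D).ge hv.2, hv.1⟩

variable [DecidableEq I] {R Z : Type*} [Fintype R] [Fintype Z]
  {e : R × Z ↪ I} {W : I → Finset V}

lemma exists_rareIn_not_serves_translate [AddGroup Z] (hZ : Fintype.card Z = 500 * t)
    (hk : 100 ≤ k) (hG2 : CondG2 G k t) (hτ : 2 * τ₃ + rho * sigma1 ≤ τ₂)
    (hav : ∀ x, ∀ u ∈ G.S (e x),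
      ManyIn (outN E u) (τ₂ * k * t : ℕ) (Available E G k t τ₂ (W (e x))) ∧
      ManyIn (inN E u) (τ₂ * k * t : ℕ) (Available E G k t τ₂ (W (e x)))) :
    ∃ f : R → Z, RareIn univ (1 / 100) fun i => ¬ RareIn univ (1 / 2) fun b =>
      ¬ Serves E G k t (τ₃ * k * t : ℕ) (transversal e fun b => f b + i) (W (e (b, f b + i)))
        (e (b, f b + i)) := by
  classical
  let Bad (f : R → Z) (b : R) : Prop :=
    ¬ Serves E G k t (τ₃ * k * t : ℕ) (transversal e f) (W (e (b, f b))) (e (b, f b))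
  have hrare (a : R) (j : Z) : RareIn (through a j) (1 / 200) (Bad · a) := by
    have hS : (#(G.S (e (a, j))) : ℝ) ≤ 10 ^ 4 := by exact_mod_cast (hG2 (e (a, j))).1
    refine ((rarelyMisses_transversal e a j hZ hk).not_serves (by norm_num)
      (two_mul_add_card_X_le hG2 hτ _) (hav (a, j))).mono (by linarith) fun f hf hbad => ?_
    rwa [← (mem_filter.1 hf).2]
  obtain ⟨f, hf⟩ := exists_rareIn_translate (r := 1 / 2) (by norm_num) (by norm_num) hrare
  exact ⟨f, hf.mono (by norm_num) fun _ _ => id⟩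

lemma exists_disjoint_light_serving [Nonempty V] [AddGroup Z] (hR : Fintype.card R = 20 * k)
    (hZ : Fintype.card Z = 500 * t) (hk : 100 ≤ k) (hG1 : CondG1 G) (hG2 : CondG2 G k t)
    (hτ : 2 * τ₃ + rho * sigma1 ≤ τ₂)
    (hav : ∀ x, ∀ u ∈ G.S (e x),
      ManyIn (outN E u) (τ₂ * k * t : ℕ) (Available E G k t τ₂ (W (e x))) ∧
      ManyIn (inN E u) (τ₂ * k * t : ℕ) (Available E G k t τ₂ (W (e x)))) :
    ∃ F : Fin (sigma3 * t) → R → Z,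
      (Pairwise fun i j => Disjoint (transversal e (F i)) (transversal e (F j))) ∧
      (∀ i, 10 * (sigma3 * t) * #((transversal e (F i)).biUnion G.U) ≤ Fintype.card V) ∧
      ∀ i, ∃ B ⊆ transversal e (F i), #B = 10 * k ∧
        ∀ α ∈ B, Serves E G k t (τ₃ * k * t : ℕ) (transversal e (F i)) (W α) α := by
  obtain ⟨f, hf⟩ := exists_rareIn_not_serves_translate hZ hk hG2 hτ hav
  have hdisj {i j : Z} (hij : i ≠ j) :
      Disjoint (transversal e fun b => f b + i) (transversal e fun b => f b + j) :=
    disjoint_transversal fun b => mt add_left_cancel hij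
  have hheavy := rareIn_card_le_mul_card (s := (univ : Finset Z)) (q := 1 / 5) (by norm_num)
    (U := fun i => (transversal e fun b => f b + i).biUnion G.U)
    fun i _ j _ hij => disjoint_biUnion_gadgets hG1 (hdisj hij)
  have hcard : (#(univ : Finset Z) : ℝ) = 500 * t := by rw [card_univ, hZ]; push_cast; rfl
  obtain ⟨g, hg⟩ := (hf.or hheavy).manyIn_not.exists_embedding (n := sigma3 * t) (by
    rw [hcard, sigma3]; push_cast; nlinarith [(Nat.cast_nonneg t : (0 : ℝ) ≤ t)])
  simp only [not_or, not_not, not_le, hcard] at hg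
  refine ⟨fun i b => f b + g i, fun i j hij => hdisj (g.injective.ne hij), fun i => ?_, fun i => ?_⟩
  · have hlight := (hg i).2.le
    rw [show (1 / 5 * (500 * t) : ℝ) = 10 * (10 * t) by ring] at hlight
    exact_mod_cast hlight
  · refine exists_subset_transversal_card_eq (P := fun α => Serves E G k t _ _ (W α) α) (hg i).1 ?_
    rw [hR]
    push_cast
    linarith

end Partition

theorem statement13_general {V I : Type*} [Fintype V] [DecidableEq V] [Fintype I] [DecidableEq I]
    (E : V → V → Prop) [DecidableRel E] (G : GadgetSystem V I) {k t τ₂ τ₃ : ℕ} (hk : 100 ≤ k)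
    (ht : 0 < t) (hτ : 2 * τ₃ + rho * sigma1 ≤ τ₂) (hG1 : CondG1 G) (hG2 : CondG2 G k t)
    (hG6 : CondG6 E G k t) {𝒜₂ : Finset I} (h𝒜₂ : #𝒜₂ = sigma2 * k * t)
    (hav : ∀ α ∈ 𝒜₂, ∀ u ∈ G.S α,
      ManyIn (outN E u) (τ₂ * k * t : ℕ) (Available E G k t τ₂ (Wof G (𝒜₂.erase α))) ∧
      ManyIn (inN E u) (τ₂ * k * t : ℕ) (Available E G k t τ₂ (Wof G (𝒜₂.erase α)))) :
    ∃ (𝒜₃ : Finset I) (B : Fin (sigma3 * t) → Finset I),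
      𝒜₃ ⊆ 𝒜₂ ∧ (∀ i j, i ≠ j → Disjoint (B i) (B j)) ∧ univ.biUnion B = 𝒜₃ ∧
      (∀ i, #(B i) = 10 * k) ∧
      (∀ i, ∀ α ∈ B i, ∀ u ∈ G.S α,
        ManyIn (outN E u) (τ₃ * k * t : ℕ)
          (Eligible E G k t τ₃ (B i) (Wof G (𝒜₃ \ B i) \ G.X α)) ∧
        ManyIn (inN E u) (τ₃ * k * t : ℕ)
          (Eligible E G k t τ₃ (B i) (Wof G (𝒜₃ \ B i) \ G.X α))) ∧
      ∀ i, ManyIn (Vgood E G k t ∩ Wof G 𝒜₃) (Fintype.card V / 10)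
        (Eligible E G k t τ₃ (B i) (Wof G 𝒜₃)) := by
  have : NeZero (500 * t) := ⟨by omega⟩
  obtain ⟨e, he⟩ := exists_grid_embedding h𝒜₂
  have : Nonempty V := ⟨G.sp (e (⟨0, by omega⟩, 0))⟩
  obtain ⟨F, hFdisj, hFlight, hF⟩ := exists_disjoint_light_serving
    (W := fun α => Wof G (𝒜₂.erase α)) (Fintype.card_fin _)
    (ZMod.card _) hk hG1 hG2 hτ fun x => hav (e x) (he x)
  choose B hBF hBcard hB using hF
  have hB𝒜₂ (i) : B i ⊆ 𝒜₂ := (hBF i).trans (transversal_subset he _)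
  have hW (i α) (hα : α ∈ B i) : Wof G (𝒜₂.erase α) ⊆ Wof G (univ.biUnion B \ B i) :=
    Wof_anti fun β hβ => mem_erase.2 ⟨fun h => (mem_sdiff.1 hβ).2 (h ▸ hα),
      biUnion_subset.2 (fun i _ => hB𝒜₂ i) (mem_sdiff.1 hβ).1⟩
  have hsmall : 10 * #((univ.biUnion B).biUnion G.U) ≤ Fintype.card V := by
    rw [biUnion_biUnion]
    refine mul_card_biUnion_le fun i => le_trans ?_ (hFlight i)
    rw [Fintype.card_fin]
    gcongr
    exact hBF i
  refine ⟨univ.biUnion B, B, biUnion_subset.2 fun i _ => hB𝒜₂ i, fun i j hij =>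
    (hFdisj hij).mono (hBF i) (hBF j), rfl, hBcard, fun i α hα u hu => ?_, fun i => ?_⟩
  · have hmono (v) (hv : NiceFor E G k t (τ₃ * k * t : ℕ) (transversal e (F i)) _ v) :
        Eligible E G k t τ₃ (B i) (Wof G (univ.biUnion B \ B i) \ G.X α) v :=
      hv.mono (hBF i) (sdiff_subset_sdiff (hW i α hα) Subset.rfl)
    exact ((hB i α hα).neighbours u hu).imp (·.mono_pred hmono) (·.mono_pred hmono)
  · obtain ⟨α, hα⟩ : (B i).Nonempty := card_pos.1 (by rw [hBcard]; omega)
    exact ((hB i α hα).manyIn_nice1 hG6 hsmall).mono_pred fun v hv =>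
      Or.inl (hv.mono (hBF i) Subset.rfl)

/-- Proposition 4.12: partition with many eligible neighbours. -/
theorem statement13 :
    ∃ C : ℕ, ∀ (τ₁ τ₂ τ₃ k t : ℕ),
      C ≤ τ₃ → C * τ₃ ≤ τ₂ → C * τ₂ ≤ τ₁ → C * τ₁ ≤ k → 2 ≤ t →
      ∀ (V : Type) [Fintype V] [DecidableEq V] (E : V → V → Prop) [DecidableRel E],
        IsTournament E → StronglyKConnected E (τ₁ * k * t) →
        ∀ G : GadgetSystem V (Fin (sigma1 * k * t)),
          GadgetHyp E G k t → GadgetHyp2 E G k t τ₁ →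
          ∀ 𝒜₂ : Finset (Fin (sigma1 * k * t)),
            𝒜₂.card = sigma2 * k * t →
            (∀ α ∈ 𝒜₂, ∀ s ∈ G.S α,
              ManyIn (outN E s) ((τ₂ * k * t : ℕ) : ℝ)
                (Available E G k t τ₂ (Wof G (𝒜₂.erase α))) ∧
              ManyIn (inN E s) ((τ₂ * k * t : ℕ) : ℝ)
                (Available E G k t τ₂ (Wof G (𝒜₂.erase α)))) →
            ∃ (𝒜₃ : Finset (Fin (sigma1 * k * t)))
              (B : Fin (sigma3 * t) → Finset (Fin (sigma1 * k * t))),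
              𝒜₃ ⊆ 𝒜₂ ∧
              (∀ i j : Fin (sigma3 * t), i ≠ j → Disjoint (B i) (B j)) ∧
              Finset.univ.biUnion B = 𝒜₃ ∧
              (∀ i, (B i).card = 10 * k) ∧
              (∀ i, ∀ α ∈ B i, ∀ u ∈ G.S α,
                ManyIn (outN E u) ((τ₃ * k * t : ℕ) : ℝ)
                  (Eligible E G k t τ₃ (B i) (Wof G (𝒜₃ \ B i) \ G.X α)) ∧
                ManyIn (inN E u) ((τ₃ * k * t : ℕ) : ℝ)
                  (Eligible E G k t τ₃ (B i) (Wof G (𝒜₃ \ B i) \ G.X α))) ∧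
              (∀ i, ManyIn (Vgood E G k t ∩ Wof G 𝒜₃) ((Fintype.card V : ℝ) / 10)
                (Eligible E G k t τ₃ (B i) (Wof G 𝒜₃))) := by
  exact ⟨10 ^ 70, fun τ₁ τ₂ τ₃ k t _ _ _ _ ht V _ _ E _ _ _ G hG hG' 𝒜₂ h𝒜₂ hav =>
    statement13_general E G (by omega) (by omega) (by simp only [rho, sigma1]; omega) hG.1 hG.2.1
      hG'.1 h𝒜₂ hav⟩

end TournamentPartition
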